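/- Let (G, S) be a noncommutative S-simple group with triality, S = ⟨σ, ρ⟩ with σ^2 = ρ^3 = (σρ)^2 = 1. Then either G is a simple group, or G = A × A × A for a simple group A, with the triality automorphisms acting by (a, b, c)^ρ = (c, a, b) and (a, b, c)^σ = (a, c, b). -/

import Mathlib

open Matrix

/-! Groups with triality (Doro). -/

/-- `(G, S)` is a group with triality: `S = ⟨σ, ρ | σ² = ρ³ = (σρ)² = 1⟩ ≅ S₃` is a
group of automorphisms of `G` and the triality identity
`[g,σ]·[g,σ]^ρ·[g,σ]^{ρ²} = 1` holds for all `g ∈ G`, where `[g,σ] = g⁻¹·g^σ`. -/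
structure IsGroupWithTriality (G : Type*) [Group G] (σ ρ : MulAut G) : Prop where
  sigma_sq : σ ^ 2 = 1
  rho_cube : ρ ^ 3 = 1
  sigma_rho_sq : (σ * ρ) ^ 2 = 1
  sigma_ne_one : σ ≠ 1
  rho_ne_one : ρ ≠ 1
  triality : ∀ g : G, (g⁻¹ * σ g) * ρ (g⁻¹ * σ g) * ρ (ρ (g⁻¹ * σ g)) = 1

/-- A group with triality is `S`-simple if it has no proper nontrivial `S`-invariant
normal subgroup. -/
def IsSTrialitySimple (G : Type*) [Group G] (σ ρ : MulAut G) : Prop :=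
  ∀ N : Subgroup G, N.Normal → (∀ n ∈ N, σ n ∈ N) → (∀ n ∈ N, ρ n ∈ N) →
    N = ⊥ ∨ N = ⊤

/-!
The group is in fact simple under `ρ` alone. If `N` is a `ρ`-invariant normal subgroup with
`N ∩ Nσ = 1`, then the triality identity splits along `N × Nσ` into `x · xρ · xρ² = 1` on `N`. When
`G = N × Nσ`, this makes every `x ∈ N` commute with all conjugates of `x`, `xρ` and `xρ²`, hence
with the `S`-invariant normal subgroup generated by `x`, so that `x` is central.

If `G` is not simple, some nontrivial normal `N` meets `Nρ` trivially, and by the previous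
paragraph `G = N × Nρ × Nρ²`. As `Nσ` is not central, it meets one of the three factors, and some
`Nρⁱ ∩ (Nρⁱ)σ` is a nontrivial `σ`-invariant replacement for `N`. Uniqueness of decompositions,
applied to the triality identity, shows that `σ` fixes `N` pointwise, so it exchanges the other two
factors.
-/

open Subgroup
open scoped Pointwise

section DirectFactors

variable {G : Type*} [Group G]

theorem inf_le_center_of_le_centralizer {H K : Subgroup G} (hK : K ≤ centralizer (H : Set G))
    (htop : H ⊔ K = ⊤) : H ⊓ K ≤ center G := by
  rw [← centralizer_univ, ← coe_top, ← htop]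
  refine le_centralizer_iff.mp (sup_le ?_ ?_)
  · exact (le_centralizer_iff.mp hK).trans (centralizer_le inf_le_right)
  · exact hK.trans (centralizer_le inf_le_left)

theorem le_centralizer_of_disjoint {H K : Subgroup G} [H.Normal] [K.Normal] (h : Disjoint H K) :
    K ≤ centralizer (H : Set G) :=
  commutator_eq_bot_iff_le_centralizer.mp
    (commutator_eq_bot_of_disjoint h.symm)

theorem exists_conj_eq_conj_of_sup_centralizer_eq_top {M : Subgroup G} [M.Normal]
    (h : M ⊔ centralizer (M : Set G) = ⊤) (g : G) :
    ∃ m ∈ M, ∀ x ∈ M, g * x * g⁻¹ = m * x * m⁻¹ := by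
  obtain ⟨m, hm, c, hc, rfl⟩ := mem_sup_of_normal_right.mp (h ▸ mem_top g)
  refine ⟨m, hm, fun x hx => ?_⟩
  calc m * c * x * (m * c)⁻¹ = m * (c * x) * c⁻¹ * m⁻¹ := by group
    _ = m * (x * c) * c⁻¹ * m⁻¹ := by rw [hc x hx]
    _ = m * x * m⁻¹ := by group

theorem normal_map_subtype_of_sup_centralizer_eq_top {M : Subgroup G} [M.Normal]
    (h : M ⊔ centralizer (M : Set G) = ⊤) (K : Subgroup M) [hK : K.Normal] :
    (K.map M.subtype).Normal := by
  refine ⟨?_⟩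
  rintro _ ⟨k, hk, rfl⟩ g
  obtain ⟨m, hm, hgm⟩ := exists_conj_eq_conj_of_sup_centralizer_eq_top h g
  exact ⟨⟨m, hm⟩ * k * ⟨m, hm⟩⁻¹, hK.conj_mem k hk ⟨m, hm⟩, (hgm k k.2).symm⟩

theorem isSimpleGroup_of_sup_centralizer_eq_top {M : Subgroup G} [M.Normal] (hM : M ≠ ⊥)
    (h : M ⊔ centralizer (M : Set G) = ⊤)
    (hmin : ∀ K : Subgroup G, K.Normal → K ≤ M → K ≠ ⊥ → K = M) : IsSimpleGroup M where
  toNontrivial := (nontrivial_iff_ne_bot M).mpr hM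
  eq_bot_or_eq_top_of_normal K hK := by
    refine or_iff_not_imp_left.mpr fun hKbot => ?_
    have hKM : K.map M.subtype = M := by
      refine hmin _ (normal_map_subtype_of_sup_centralizer_eq_top h K) (map_subtype_le K) ?_
      rwa [Ne, map_eq_bot_iff_of_injective _ M.subtype_injective]
    refine map_injective M.subtype_injective ?_
    rw [hKM, ← MonoidHom.range_eq_map, range_subtype]

end DirectFactors

section PointwiseAction

variable {G : Type*} [Group G]

instance normal_mulAut_smul (φ : MulAut G) (N : Subgroup G) [hN : N.Normal] : (φ • N).Normal :=
  hN.map φ.toMonoidHom φ.surjective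

theorem smul_eq_self_of_characteristic (φ : MulAut G) (N : Subgroup G) [hN : N.Characteristic] :
    φ • N = N :=
  characteristic_iff_map_eq.mp hN φ

theorem disjoint_smul_smul {H K : Subgroup G} (h : Disjoint H K) (φ : MulAut G) :
    Disjoint (φ • H) (φ • K) := by
  rw [disjoint_iff, ← smul_inf, h.eq_bot, smul_bot]

theorem apply_mem_of_smul_eq {φ : MulAut G} {N : Subgroup G} (hN : φ • N = N) {x : G}
    (hx : x ∈ N) : φ x ∈ N :=
  hN ▸ smul_mem_pointwise_smul x φ N hx

theorem smul_smul_smul_of_pow_three_eq_one {α X : Type*} [Monoid α] [MulAction α X] {a : α}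
    (ha : a ^ 3 = 1) (x : X) : a • a • a • x = x := by
  rw [smul_smul, smul_smul, ← pow_three', ha, one_smul]

theorem rotations_le_centralizer {ρ : MulAut G} (hρ : ρ ^ 3 = 1) {M : Subgroup G} [M.Normal]
    (hd : Disjoint M (ρ • M)) : ρ • M ⊔ ρ • ρ • M ≤ centralizer (M : Set G) := by
  have hd₂ : Disjoint (ρ • ρ • M) (ρ • ρ • ρ • M) := disjoint_smul_smul (disjoint_smul_smul hd ρ) ρ
  rw [smul_smul_smul_of_pow_three_eq_one hρ] at hd₂
  exact sup_le (le_centralizer_of_disjoint hd) (le_centralizer_of_disjoint hd₂.symm)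

end PointwiseAction

section RotationClosure

variable {G : Type*} [Group G] {ρ : MulAut G} {N : Subgroup G} {x : G}

/-- The smallest `ρ`-invariant normal subgroup containing `x`, when `ρ ^ 3 = 1`. -/
def rotationClosure (ρ : MulAut G) (x : G) : Subgroup G :=
  normalClosure {x, ρ x, ρ (ρ x)}

instance rotationClosure_normal : (rotationClosure ρ x).Normal :=
  normalClosure_normal

theorem mem_rotationClosure_self : x ∈ rotationClosure ρ x :=
  subset_normalClosure (Set.mem_insert _ _)

theorem rotationClosure_le [N.Normal] (hN : ρ • N = N) (hx : x ∈ N) : rotationClosure ρ x ≤ N := by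
  have hρx := apply_mem_of_smul_eq hN hx
  refine normalClosure_le_normal ?_
  rintro _ (rfl | rfl | rfl)
  exacts [hx, hρx, apply_mem_of_smul_eq hN hρx]

theorem smul_rotationClosure (hρ : ρ ^ 3 = 1) : ρ • rotationClosure ρ x = rotationClosure ρ x := by
  have himage : ρ '' {x, ρ x, ρ (ρ x)} = {x, ρ x, ρ (ρ x)} := by
    have hρx : ρ (ρ (ρ x)) = x := smul_smul_smul_of_pow_three_eq_one hρ x
    rw [Set.image_insert_eq, Set.image_pair, hρx, Set.pair_comm _ x, Set.insert_comm]
  exact (map_normalClosure _ ρ.toMonoidHom ρ.surjective).trans (congrArg normalClosure himage)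

end RotationClosure

section SplittingAutomorphism

variable {G : Type*} [Group G]

theorem commute_of_mul_mul_eq_one_of_inv {a b c : G} (h : a * b * c = 1)
    (h' : a⁻¹ * b⁻¹ * c⁻¹ = 1) : Commute a b :=
  calc a * b = c⁻¹ := eq_inv_of_mul_eq_one_left h
    _ = (a⁻¹ * b⁻¹)⁻¹ := eq_inv_of_mul_eq_one_right h'
    _ = b * a := by group

variable {ρ : MulAut G} {N : Subgroup G} {x y : G}

theorem commute_conj_apply_of_splitting (h : ∀ x ∈ N, x * ρ x * ρ (ρ x) = 1)
    (hx : x ∈ N) (hy : y ∈ N) : Commute x (y * ρ x * y⁻¹) := by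
  have hρy : ρ y = y⁻¹ * (ρ (ρ y))⁻¹ := by
    rw [eq_inv_mul_iff_mul_eq, eq_inv_of_mul_eq_one_left (h y hy)]
  have key : ∀ z ∈ N, z * (y * ρ z * y⁻¹) * ((ρ (ρ y))⁻¹ * ρ (ρ z) * ρ (ρ y)) = 1 := by
    intro z hz
    calc z * (y * ρ z * y⁻¹) * ((ρ (ρ y))⁻¹ * ρ (ρ z) * ρ (ρ y))
        = z * y * (ρ z * (y⁻¹ * (ρ (ρ y))⁻¹)) * (ρ (ρ z) * ρ (ρ y)) := by group
      _ = z * y * ρ (z * y) * ρ (ρ (z * y)) := by simp only [← hρy, map_mul]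
      _ = 1 := h _ (N.mul_mem hz hy)
  refine commute_of_mul_mul_eq_one_of_inv (key x hx) ?_
  convert key x⁻¹ (N.inv_mem hx) using 2 <;> simp only [map_inv] <;> group

theorem commute_conj_of_splitting (hρ : ρ ^ 3 = 1) (hN : ρ • N = N)
    (h : ∀ x ∈ N, x * ρ x * ρ (ρ x) = 1) (hx : x ∈ N) (hy : y ∈ N) {w : G}
    (hw : w ∈ ({x, ρ x, ρ (ρ x)} : Set G)) : Commute x (y * w * y⁻¹) := by
  have hone : Commute x (y * ρ x * y⁻¹) := commute_conj_apply_of_splitting h hx hy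
  have htwo : Commute x (y * ρ (ρ x) * y⁻¹) := by
    have hρx : ρ (ρ (ρ x)) = x := smul_smul_smul_of_pow_three_eq_one hρ x
    have hmem : ρ (ρ x) ∈ N := apply_mem_of_smul_eq hN (apply_mem_of_smul_eq hN hx)
    have := (commute_conj_apply_of_splitting h hmem (N.inv_mem hy)).conj y
    rw [hρx] at this
    simpa [mul_assoc] using this.symm
  rcases hw with rfl | rfl | rfl
  · have hw : w = (ρ (ρ w))⁻¹ * (ρ w)⁻¹ := by
      rw [← _root_.mul_inv_rev, eq_inv_iff_mul_eq_one, ← mul_assoc, h w hx]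
    have hconj : y * w * y⁻¹ = (y * ρ (ρ w) * y⁻¹)⁻¹ * (y * ρ w * y⁻¹)⁻¹ := by
      nth_rw 1 [hw]
      group
    rw [hconj]
    exact htwo.inv_right.mul_right hone.inv_right
  · exact hone
  · exact htwo

theorem rotationClosure_le_centralizer_of_splitting [N.Normal] (hρ : ρ ^ 3 = 1) (hN : ρ • N = N)
    (h : ∀ x ∈ N, x * ρ x * ρ (ρ x) = 1) (htop : N ⊔ centralizer (N : Set G) = ⊤) (hx : x ∈ N) :
    rotationClosure ρ x ≤ centralizer {x} := by
  refine (closure_le _).mpr fun z hz => ?_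
  obtain ⟨w, hw, hwz⟩ := Group.mem_conjugatesOfSet_iff.mp hz
  obtain ⟨g, rfl⟩ := isConj_iff.mp hwz
  have hwN : w ∈ N := rotationClosure_le hN hx (subset_normalClosure hw)
  obtain ⟨y, hy, hgy⟩ := exists_conj_eq_conj_of_sup_centralizer_eq_top htop g
  rw [hgy w hwN]
  exact mem_centralizer_singleton_iff.mpr (commute_conj_of_splitting hρ hN h hx hy hw).symm

end SplittingAutomorphism

/-- `G` has no proper nontrivial normal subgroup mapped onto itself by every automorphism in `Φ`.
`S`-simplicity implies this for `Φ = {σ, ρ}`, and it is then shown to hold for `Φ = {ρ}`. -/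
def IsSimpleUnder {G : Type*} [Group G] (Φ : Set (MulAut G)) : Prop :=
  ∀ N : Subgroup G, N.Normal → (∀ φ ∈ Φ, φ • N = N) → N = ⊥ ∨ N = ⊤

theorem IsSTrialitySimple.isSimpleUnder {G : Type*} [Group G] {σ ρ : MulAut G}
    (h : IsSTrialitySimple G σ ρ) : IsSimpleUnder {σ, ρ} := fun N hN hΦ =>
  h N hN (fun _ => apply_mem_of_smul_eq (hΦ σ (by simp)))
    (fun _ => apply_mem_of_smul_eq (hΦ ρ (by simp)))

theorem IsSimpleUnder.center_eq_bot {G : Type*} [Group G] {Φ : Set (MulAut G)}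
    (h : IsSimpleUnder Φ) (hnc : ∃ x y : G, x * y ≠ y * x) : center G = ⊥ := by
  refine (h _ inferInstance fun φ _ => smul_eq_self_of_characteristic φ _).resolve_right ?_
  intro htop
  obtain ⟨x, y, hxy⟩ := hnc
  exact hxy (mem_center_iff.mp (htop ▸ mem_top y) x)

namespace IsGroupWithTriality

variable {G : Type*} [Group G] {σ ρ : MulAut G} (ht : IsGroupWithTriality G σ ρ)
include ht

section Relations

variable {X : Type*} [MulAction (MulAut G) X] (x : X)

theorem sigma_smul_sigma_smul : σ • σ • x = x := by
  rw [smul_smul, ← sq, ht.sigma_sq, one_smul]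

theorem rho_smul_rho_smul_rho_smul : ρ • ρ • ρ • x = x :=
  smul_smul_smul_of_pow_three_eq_one ht.rho_cube x

theorem sigma_smul_rho_smul : σ • ρ • x = ρ • ρ • σ • x := by
  have h : σ • ρ • σ • ρ • x = x := by
    rw [smul_smul, smul_smul, smul_smul, mul_assoc, ← sq, ht.sigma_rho_sq, one_smul]
  rw [← ht.rho_smul_rho_smul_rho_smul (σ • ρ • x), ← ht.sigma_smul_sigma_smul (ρ • σ • ρ • x), h]

theorem sigma_smul_rho_smul_rho_smul : σ • ρ • ρ • x = ρ • σ • x := by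
  rw [sigma_smul_rho_smul ht, sigma_smul_rho_smul ht, rho_smul_rho_smul_rho_smul ht]

end Relations

section RhoInvariant

variable {N : Subgroup G}

theorem rho_smul_sigma_smul_of_rho_smul_eq (hN : ρ • N = N) : ρ • σ • N = σ • N := by
  rw [← ht.sigma_smul_rho_smul_rho_smul, hN, hN]

theorem inf_sigma_smul_eq_bot_or_eq_top [N.Normal] (hss : IsSimpleUnder {σ, ρ})
    (hN : ρ • N = N) : N ⊓ σ • N = ⊥ ∨ N ⊓ σ • N = ⊤ := by
  refine hss _ inferInstance ?_
  rintro φ (rfl | rfl)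
  · rw [smul_inf, ht.sigma_smul_sigma_smul, inf_comm]
  · rw [smul_inf, ht.rho_smul_sigma_smul_of_rho_smul_eq hN, hN]

theorem sup_sigma_smul_eq_bot_or_eq_top [N.Normal] (hss : IsSimpleUnder {σ, ρ})
    (hN : ρ • N = N) : N ⊔ σ • N = ⊥ ∨ N ⊔ σ • N = ⊤ := by
  refine hss _ inferInstance ?_
  rintro φ (rfl | rfl)
  · rw [smul_sup, ht.sigma_smul_sigma_smul, sup_comm]
  · rw [smul_sup, ht.rho_smul_sigma_smul_of_rho_smul_eq hN, hN]

theorem mul_rho_mul_rho_rho_eq_one_of_disjoint [N.Normal] (hN : ρ • N = N)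
    (hd : Disjoint N (σ • N)) {x : G} (hx : x ∈ N) : x * ρ x * ρ (ρ x) = 1 := by
  have hσN : ρ • σ • N = σ • N := ht.rho_smul_sigma_smul_of_rho_smul_eq hN
  set y := σ x⁻¹
  have hx₁ : ρ x ∈ N := apply_mem_of_smul_eq hN hx
  have hx₂ : ρ (ρ x) ∈ N := apply_mem_of_smul_eq hN hx₁
  have hy : y ∈ σ • N := smul_mem_pointwise_smul _ σ N (N.inv_mem hx)
  have hy₁ : ρ y ∈ σ • N := apply_mem_of_smul_eq hσN hy
  have hy₂ : ρ (ρ y) ∈ σ • N := apply_mem_of_smul_eq hσN hy₁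
  have hcomm {a b : G} (ha : a ∈ N) (hb : b ∈ σ • N) : a * b = b * a :=
    le_centralizer_of_disjoint hd hb a ha
  have hmul : x * ρ x * ρ (ρ x) * (y * ρ y * ρ (ρ y)) = 1 := by
    calc x * ρ x * ρ (ρ x) * (y * ρ y * ρ (ρ y))
        = x * ρ x * (ρ (ρ x) * (y * ρ y)) * ρ (ρ y) := by group
      _ = x * (ρ x * y) * ρ y * ρ (ρ x) * ρ (ρ y) := by
        rw [hcomm hx₂ (mul_mem hy hy₁)]; group
      _ = x * y * ρ (x * y) * ρ (ρ (x * y)) := by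
        rw [hcomm hx₁ hy]; simp only [map_mul, mul_assoc]
      _ = 1 := by simpa only [inv_inv] using ht.triality x⁻¹
  exact (disjoint_iff_mul_eq_one.mp hd (mul_mem (mul_mem hx hx₁) hx₂)
    (mul_mem (mul_mem hy hy₁) hy₂) hmul).1

theorem eq_bot_of_disjoint_sigma_smul [N.Normal] (hss : IsSimpleUnder {σ, ρ})
    (hc : center G = ⊥) (hN : ρ • N = N) (hd : Disjoint N (σ • N)) : N = ⊥ := by
  rcases ht.sup_sigma_smul_eq_bot_or_eq_top hss hN with hbot | htop
  · exact le_bot_iff.mp (le_sup_left.trans hbot.le)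
  refine (eq_bot_iff_forall N).mpr fun x hx => ?_
  have hcN : σ • N ≤ centralizer (N : Set G) := le_centralizer_of_disjoint hd
  have hXN : rotationClosure ρ x ≤ N := rotationClosure_le hN hx
  have hX : rotationClosure ρ x ≤ centralizer {x} :=
    rotationClosure_le_centralizer_of_splitting ht.rho_cube hN
      (fun _ => ht.mul_rho_mul_rho_rho_eq_one_of_disjoint hN hd)
      (top_le_iff.mp (htop.ge.trans (sup_le_sup_left hcN N))) hx
  have hσX : σ • rotationClosure ρ x ≤ centralizer {x} :=
    (smul_mono_right σ hXN).trans
      (hcN.trans (centralizer_le (Set.singleton_subset_iff.mpr hx)))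
  have hle : rotationClosure ρ x ⊔ σ • rotationClosure ρ x ≤ centralizer {x} := sup_le hX hσX
  rw [← mem_bot]
  rcases ht.sup_sigma_smul_eq_bot_or_eq_top hss
    (smul_rotationClosure ht.rho_cube (x := x)) with hbot | htop
  · exact hbot ▸ mem_sup_left mem_rotationClosure_self
  · rw [htop, top_le_iff, centralizer_eq_top_iff_subset, Set.singleton_subset_iff] at hle
    exact hc ▸ hle

end RhoInvariant

theorem isSimpleUnder_rho (hss : IsSimpleUnder {σ, ρ}) (hc : center G = ⊥) :
    IsSimpleUnder {ρ} := by
  intro N _ hρN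
  have hN : ρ • N = N := hρN ρ rfl
  rcases ht.inf_sigma_smul_eq_bot_or_eq_top hss hN with hbot | htop
  · exact Or.inl (ht.eq_bot_of_disjoint_sigma_smul hss hc hN (disjoint_iff.mpr hbot))
  · exact Or.inr (top_le_iff.mp (htop.ge.trans inf_le_left))

end IsGroupWithTriality

namespace IsSimpleUnder

variable {G : Type*} [Group G] {ρ : MulAut G} (hs : IsSimpleUnder {ρ}) (hρ : ρ ^ 3 = 1)
  (hc : center G = ⊥)

section

variable {N : Subgroup G} [N.Normal]

include hs hρ

theorem sup_rotations_eq_top (hN : N ≠ ⊥) : N ⊔ (ρ • N ⊔ ρ • ρ • N) = ⊤ := by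
  refine (hs _ inferInstance ?_).resolve_left fun h => hN (le_bot_iff.mp (le_sup_left.trans h.le))
  rintro φ rfl
  rw [smul_sup, smul_sup, smul_smul_smul_of_pow_three_eq_one hρ, ← sup_assoc, sup_comm]

theorem inf_rotations_eq_bot (hN : N ≠ ⊤) : N ⊓ (ρ • N ⊓ ρ • ρ • N) = ⊥ := by
  refine (hs _ inferInstance ?_).resolve_right fun h => hN (top_le_iff.mp (h.ge.trans inf_le_left))
  rintro φ rfl
  rw [smul_inf, smul_inf, smul_smul_smul_of_pow_three_eq_one hρ, ← inf_assoc, inf_comm]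

theorem exists_normal_disjoint_smul (hbot : N ≠ ⊥) (htop : N ≠ ⊤) :
    ∃ M : Subgroup G, M.Normal ∧ M ≠ ⊥ ∧ Disjoint M (ρ • M) := by
  by_cases hd : Disjoint N (ρ • N)
  · exact ⟨N, inferInstance, hbot, hd⟩
  · refine ⟨N ⊓ ρ • N, inferInstance, disjoint_iff.not.mp hd, disjoint_iff.mpr ?_⟩
    rw [smul_inf, inf_assoc, ← inf_assoc (ρ • N), inf_idem, hs.inf_rotations_eq_bot hρ htop]

end

section

variable {M : Subgroup G} [M.Normal] (hd : Disjoint M (ρ • M))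

include hs hρ hd

theorem sup_centralizer_eq_top (hM : M ≠ ⊥) : M ⊔ centralizer (M : Set G) = ⊤ :=
  top_le_iff.mp ((hs.sup_rotations_eq_top hρ hM).ge.trans
    (sup_le_sup_left (rotations_le_centralizer hρ hd) M))

include hc

theorem disjoint_rotations (hM : M ≠ ⊥) : Disjoint M (ρ • M ⊔ ρ • ρ • M) :=
  disjoint_iff_inf_le.mpr (hc ▸ inf_le_center_of_le_centralizer (rotations_le_centralizer hρ hd)
    (hs.sup_rotations_eq_top hρ hM))

theorem eq_of_normal_of_le {K : Subgroup G} [K.Normal] (hKM : K ≤ M) (hK : K ≠ ⊥) : K = M := by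
  have hM : M ≠ ⊥ := ne_bot_of_le_ne_bot hK hKM
  refine le_antisymm hKM fun m hm => ?_
  obtain ⟨k, hk, w, hw, rfl⟩ :=
    mem_sup_of_normal_right.mp (hs.sup_rotations_eq_top hρ hK ▸ mem_top m)
  have hwM : w ∈ M := (M.mul_mem_cancel_left (hKM hk)).mp hm
  have hwM' : w ∈ ρ • M ⊔ ρ • ρ • M :=
    sup_le_sup (smul_mono_right ρ hKM) (smul_mono_right ρ (smul_mono_right ρ hKM)) hw
  rwa [disjoint_def.mp (hs.disjoint_rotations hρ hc hd hM) hwM hwM', mul_one]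

theorem isSimpleGroup_of_disjoint_smul (hM : M ≠ ⊥) : IsSimpleGroup M :=
  isSimpleGroup_of_sup_centralizer_eq_top hM (hs.sup_centralizer_eq_top hρ hd hM)
    fun _ _ hKM hK => hs.eq_of_normal_of_le hρ hc hd hKM hK

theorem exists_mulEquiv_prod (hM : M ≠ ⊥) :
    ∃ e : G ≃* M × M × M, ∀ p, e.symm p = p.1 * (ρ p.2.1 * ρ (ρ p.2.2)) := by
  have hcent : ρ • M ⊔ ρ • ρ • M ≤ centralizer (M : Set G) := rotations_le_centralizer hρ hd
  let f₁ : M →* G := ρ.toMonoidHom.comp M.subtype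
  let f₂ : M →* G := ρ.toMonoidHom.comp f₁
  have hf₁ : f₁.range = ρ • M := by rw [MonoidHom.range_comp, range_subtype]; rfl
  have hf₂ : f₂.range = ρ • ρ • M := by rw [MonoidHom.range_comp, hf₁]; rfl
  have hcomm₁₂ (a b : M) : Commute (f₁ a) (f₂ b) :=
    Commute.map (hcent (mem_sup_left (hf₁ ▸ ⟨b, rfl⟩)) a a.2) ρ
  let g : M × M →* G := f₁.noncommCoprod f₂ hcomm₁₂
  have hg : g.range = ρ • M ⊔ ρ • ρ • M := by rw [MonoidHom.noncommCoprod_range, hf₁, hf₂]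
  have hcomm (a : M) (p : M × M) : Commute (M.subtype a) (g p) := hcent (hg ▸ ⟨p, rfl⟩) a a.2
  have hinj₁ : Function.Injective f₁ := ρ.injective.comp M.subtype_injective
  have hg_inj : Function.Injective g :=
    (MonoidHom.noncommCoprod_injective f₁ f₂ hcomm₁₂).mpr
      ⟨hinj₁, ρ.injective.comp hinj₁, hf₁ ▸ hf₂ ▸ disjoint_smul_smul hd ρ⟩
  have hinj : Function.Injective (M.subtype.noncommCoprod g hcomm) := by
    rw [MonoidHom.noncommCoprod_injective, range_subtype, hg]
    exact ⟨M.subtype_injective, hg_inj, hs.disjoint_rotations hρ hc hd hM⟩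
  have hsurj : Function.Surjective (M.subtype.noncommCoprod g hcomm) := by
    rw [← MonoidHom.range_eq_top, MonoidHom.noncommCoprod_range, range_subtype, hg,
      hs.sup_rotations_eq_top hρ hM]
  exact ⟨(MulEquiv.ofBijective _ ⟨hinj, hsurj⟩).symm, fun _ => rfl⟩

end

end IsSimpleUnder

namespace IsGroupWithTriality

variable {G : Type*} [Group G] {σ ρ : MulAut G} (ht : IsGroupWithTriality G σ ρ)
include ht

theorem exists_sigma_smul_eq_of_disjoint (hs : IsSimpleUnder {ρ}) (hc : center G = ⊥)
    {N : Subgroup G} [N.Normal] (hN : N ≠ ⊥) (hd : Disjoint N (ρ • N)) :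
    ∃ M : Subgroup G, M.Normal ∧ M ≠ ⊥ ∧ Disjoint M (ρ • M) ∧ σ • M = M := by
  by_contra! hnone
  have hdisj (R : Subgroup G) [R.Normal] (hR : Disjoint R (ρ • R)) : Disjoint R (σ • R) := by
    by_contra hσ
    refine hnone (R ⊓ σ • R) inferInstance (disjoint_iff.not.mp hσ)
      (hR.mono inf_le_left (smul_mono_right ρ inf_le_left)) ?_
    rw [smul_inf, ht.sigma_smul_sigma_smul, inf_comm]
  have hd₁ : Disjoint (ρ • N) (ρ • ρ • N) := disjoint_smul_smul hd ρ
  have h₀ : Disjoint (σ • N) N := (hdisj N hd).symm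
  have h₁ : Disjoint (σ • N) (ρ • N) := by
    have := disjoint_smul_smul
      (disjoint_smul_smul (hdisj (ρ • ρ • N) (disjoint_smul_smul hd₁ ρ)) ρ) ρ
    rw [ht.sigma_smul_rho_smul_rho_smul] at this
    simpa only [ht.rho_smul_rho_smul_rho_smul] using this.symm
  have h₂ : Disjoint (σ • N) (ρ • ρ • N) := by
    have := disjoint_smul_smul (hdisj (ρ • N) hd₁) ρ
    rw [ht.sigma_smul_rho_smul, ht.rho_smul_rho_smul_rho_smul] at this
    exact this.symm
  have hle : N ⊔ (ρ • N ⊔ ρ • ρ • N) ≤ centralizer (σ • N : Subgroup G) :=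
    sup_le (le_centralizer_of_disjoint h₀)
      (sup_le (le_centralizer_of_disjoint h₁) (le_centralizer_of_disjoint h₂))
  rw [hs.sup_rotations_eq_top ht.rho_cube hN, top_le_iff, centralizer_eq_top_iff_subset, hc] at hle
  have hσN : σ • N = ⊥ := le_bot_iff.mp hle
  exact hN (by rw [← ht.sigma_smul_sigma_smul N, hσN, smul_bot])

end IsGroupWithTriality

section TripleCoordinates

variable {G : Type*} [Group G] {σ ρ : MulAut G} {M : Subgroup G} {e : G ≃* M × M × M}
  (he : ∀ p, e.symm p = p.1 * (ρ p.2.1 * ρ (ρ p.2.2)))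
include he

theorem apply_rho_eq_of_symm_apply_eq (hρ : ρ ^ 3 = 1) (g : G) :
    e (ρ g) = ((e g).2.2, (e g).1, (e g).2.1) := by
  obtain ⟨⟨a, b, c⟩, rfl⟩ := e.symm.surjective g
  have hρc : ρ (ρ (ρ (c : G))) = c := smul_smul_smul_of_pow_three_eq_one hρ (c : G)
  have hrotate : ρ (e.symm (a, b, c)) = e.symm (c, a, b) :=
    calc ρ (e.symm (a, b, c)) = ρ a * ρ (ρ b) * c := by
          simp only [he, map_mul, hρc, mul_assoc]
      _ = e.symm (1, a, b) * e.symm (c, 1, 1) := by simp [he]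
      _ = e.symm (c, a, b) := by rw [← map_mul]; simp
  rw [hrotate, e.apply_symm_apply, e.apply_symm_apply]

theorem IsGroupWithTriality.sigma_apply_eq_self_of_mem (ht : IsGroupWithTriality G σ ρ)
    (hσ : σ • M = M) {m : G} (hm : m ∈ M) : σ m = m := by
  have hu : m⁻¹ * σ m ∈ M := M.mul_mem (M.inv_mem hm) (apply_mem_of_smul_eq hσ hm)
  let u : M := ⟨m⁻¹ * σ m, hu⟩
  have htriple : e.symm (u, u, u) = 1 := by
    rw [he, ← mul_assoc]
    exact ht.triality m
  have hu_one : u = 1 := congrArg Prod.fst ((map_eq_one_iff e.symm e.symm.injective).mp htriple)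
  exact (inv_mul_eq_one.mp (congrArg Subtype.val hu_one)).symm

theorem IsGroupWithTriality.apply_sigma_eq_of_symm_apply_eq (ht : IsGroupWithTriality G σ ρ)
    (hσ : σ • M = M) (g : G) : e (σ g) = ((e g).1, (e g).2.2, (e g).2.1) := by
  obtain ⟨⟨a, b, c⟩, rfl⟩ := e.symm.surjective g
  have hfix (m : M) : σ m = m := ht.sigma_apply_eq_self_of_mem he hσ m.2
  have hσρ (m : M) : σ (ρ m) = ρ (ρ m) :=
    (ht.sigma_smul_rho_smul (m : G)).trans (congrArg (ρ <| ρ ·) (hfix m))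
  have hσρρ (m : M) : σ (ρ (ρ m)) = ρ m :=
    (ht.sigma_smul_rho_smul_rho_smul (m : G)).trans (congrArg ρ (hfix m))
  have hswap : σ (e.symm (a, b, c)) = e.symm (a, c, b) :=
    calc σ (e.symm (a, b, c)) = a * ρ (ρ b) * ρ c := by
          simp only [he, map_mul, hσρ, hσρρ, hfix, mul_assoc]
      _ = e.symm (a, 1, b) * e.symm (1, c, 1) := by simp [he]
      _ = e.symm (a, c, b) := by rw [← map_mul]; simp
  rw [hswap, e.apply_symm_apply, e.apply_symm_apply]

end TripleCoordinates

/-- Classification of noncommutative `S`-simple groups with triality (Doro;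
Nagy–Valsecchi): either `G` is simple, or `G = A × A × A` with `A` simple and the
triality automorphisms acting by `(a,b,c)^ρ = (c,a,b)` and `(a,b,c)^σ = (a,c,b)`. -/
theorem ssimple_group_with_triality_classification {G : Type u} [Group G]
    (σ ρ : MulAut G) (ht : IsGroupWithTriality G σ ρ)
    (hnc : ∃ x y : G, x * y ≠ y * x)
    (hss : IsSTrialitySimple G σ ρ) :
    IsSimpleGroup G ∨
      ∃ (A : Type u) (_ : Group A), IsSimpleGroup A ∧
        ∃ e : G ≃* A × A × A,
          (∀ g : G, e (ρ g) = ((e g).2.2, (e g).1, (e g).2.1)) ∧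
          (∀ g : G, e (σ g) = ((e g).1, (e g).2.2, (e g).2.1)) := by
  have hss' : IsSimpleUnder {σ, ρ} := hss.isSimpleUnder
  have hc : center G = ⊥ := hss'.center_eq_bot hnc
  have hs : IsSimpleUnder {ρ} := ht.isSimpleUnder_rho hss' hc
  by_cases hsimp : ∀ N : Subgroup G, N.Normal → N = ⊥ ∨ N = ⊤
  · obtain ⟨x, y, hxy⟩ := hnc
    exact Or.inl { exists_pair_ne := ⟨_, _, hxy⟩, eq_bot_or_eq_top_of_normal := hsimp }
  · right
    push Not at hsimp
    obtain ⟨N, _, hbot, htop⟩ := hsimp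
    obtain ⟨R, _, hR, hdR⟩ := hs.exists_normal_disjoint_smul ht.rho_cube hbot htop
    obtain ⟨M, _, hM, hd, hσ⟩ := ht.exists_sigma_smul_eq_of_disjoint hs hc hR hdR
    obtain ⟨e, he⟩ := hs.exists_mulEquiv_prod ht.rho_cube hc hd hM
    exact ⟨M, inferInstance, hs.isSimpleGroup_of_disjoint_smul ht.rho_cube hc hd hM, e,
      apply_rho_eq_of_symm_apply_eq he ht.rho_cube, ht.apply_sigma_eq_of_symm_apply_eq he hσ⟩
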